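/- For every real number x with 0 < x ≤ 1, the derivative of the Hurwitz zeta function at s = 0 satisfies (d/ds) ζ_H(s, x)|_{s=0} = log Γ(x) - (1/2) log(2π), where Γ is the classical Gamma function. -/

import Mathlib

/-!
For `0 < x ≤ 1`, the value at `n + x` of `t ↦ t⁻ˢ` is interpolated linearly between its values at
`n` and `n + 1`. For `1 < re s`, summing the interpolation errors over `n ≥ 1` gives
`ζ(s, x) - ζ(s) - x⁻ˢ + x`, because the two interpolation weights add up to `1`. The error is
`O(n ^ (-re s - 2))`, so the series is holomorphic on `-1 < re s` and the identity persists there.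
Differentiating termwise at `s = 0` replaces `t⁻ˢ` by `-log t`, and the partial sums of the
interpolation errors of `log` are, up to a null sequence, those of Euler's limit formula for
`log Γ`. Hence `ζ'(0, x) - ζ'(0) = log Γ(x)`, and `ζ'(0) = -log (2π) / 2` is in Mathlib.
-/

open Filter Set Topology AffineMap

namespace LerchFormula

section LinearInterpolation

variable {E : Type*} [NormedAddCommGroup E] [NormedSpace ℝ E]

/-- The error, at the point `(1 - x) a + x b`, of the linear interpolation of `f` between `a`
and `b`. -/
noncomputable def lerpError (f : ℝ → E) (a b x : ℝ) : E :=
  f (lineMap a b x) - lineMap (f a) (f b) x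

lemma lerpError_add_one (f : ℝ → E) (a x : ℝ) :
    lerpError f a (a + 1) x = f (a + x) - f a - x • (f (a + 1) - f a) := by
  rw [lerpError, lineMap_apply_module', lineMap_apply_module', add_sub_cancel_left, smul_eq_mul,
    mul_one, add_comm x a]
  abel

lemma sum_range_lerpError (f : ℝ → E) (x : ℝ) (N : ℕ) :
    ∑ n ∈ Finset.range N, lerpError f (n + 1) (n + 1 + 1) x =
      ∑ n ∈ Finset.range N, f (n + 1 + x) - ∑ n ∈ Finset.range N, f (n + 1)
        - x • (f (N + 1) - f 1) := by
  have telescope := Finset.sum_range_sub (fun n : ℕ => f (n + 1)) N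
  simp only [Nat.cast_add_one, Nat.cast_zero, zero_add] at telescope
  simp only [lerpError_add_one, Finset.sum_sub_distrib, ← Finset.smul_sum, ← telescope]

lemma hasSum_lerpError {f : ℝ → E} {x : ℝ} {A B : E}
    (hA : HasSum (fun n : ℕ => f (n + x)) A) (hB : HasSum (fun n : ℕ => f (n + 1)) B) :
    HasSum (fun n : ℕ => lerpError f (n + 1) (n + 1 + 1) x) (A - B - f x + x • f 1) := by
  have hA' : HasSum (fun n : ℕ => f (n + 1 + x)) (A - f x) := by
    simpa using (hasSum_nat_add_iff' 1).mpr hA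
  have hB' : HasSum (fun n : ℕ => f (n + 1 + 1)) (B - f 1) := by
    simpa using (hasSum_nat_add_iff' 1).mpr hB
  simp only [lerpError_add_one]
  convert (hA'.sub hB).sub ((hB'.sub hB).const_smul x) using 1
  module

lemma norm_sub_sub_smul_deriv_le {f f' f'' : ℝ → E} {s : Set ℝ} {c y M : ℝ} (hs : Convex ℝ s)
    (hf : ∀ t ∈ s, HasDerivWithinAt f (f' t) s t)
    (hf' : ∀ t ∈ s, HasDerivWithinAt f' (f'' t) s t)
    (hM : ∀ t ∈ s, ‖f'' t‖ ≤ M) (hc : c ∈ s) (hy : y ∈ s) :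
    ‖f y - f c - (y - c) • f' c‖ ≤ M * |y - c| ^ 2 := by
  have hM0 : 0 ≤ M := (norm_nonneg _).trans (hM c hc)
  have hsub : uIcc c y ⊆ s := segment_eq_uIcc c y ▸ hs.segment_subset hc hy
  have hderiv (t) (ht : t ∈ uIcc c y) : ‖f' t - f' c‖ ≤ M * |y - c| :=
    (hs.norm_image_sub_le_of_norm_hasDerivWithin_le hf' hM hc (hsub ht)).trans
      (mul_le_mul_of_nonneg_left (abs_sub_left_of_mem_uIcc ht) hM0)
  have h := (convex_uIcc c y).norm_image_sub_le_of_norm_hasDerivWithin_le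
    (f := fun t => f t - t • f' c) (f' := fun t => f' t - f' c)
    (fun t ht => by
      simpa using! ((hf t (hsub ht)).mono hsub).sub
        ((hasDerivWithinAt_id t _).smul_const (f' c)))
    hderiv left_mem_uIcc right_mem_uIcc
  calc ‖f y - f c - (y - c) • f' c‖ = ‖f y - y • f' c - (f c - c • f' c)‖ := by
        congr 1
        module
    _ ≤ M * |y - c| * |y - c| := h
    _ = M * |y - c| ^ 2 := by ring

lemma norm_lerpError_le {f f' f'' : ℝ → E} {a b x M : ℝ} (hx : x ∈ Icc (0 : ℝ) 1)
    (hf : ∀ t ∈ uIcc a b, HasDerivWithinAt f (f' t) (uIcc a b) t)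
    (hf' : ∀ t ∈ uIcc a b, HasDerivWithinAt f' (f'' t) (uIcc a b) t)
    (hM : ∀ t ∈ uIcc a b, ‖f'' t‖ ≤ M) :
    ‖lerpError f a b x‖ ≤ M * |b - a| ^ 2 := by
  have hM0 : 0 ≤ M := (norm_nonneg _).trans (hM a left_mem_uIcc)
  set c : ℝ := lineMap a b x with hc_def
  have hc : c ∈ uIcc a b := by
    rw [← segment_eq_uIcc, segment_eq_image_lineMap]
    exact mem_image_of_mem _ hx
  have taylor (y) (hy : y ∈ uIcc a b) : ‖f y - f c - (y - c) • f' c‖ ≤ M * |b - a| ^ 2 :=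
    (norm_sub_sub_smul_deriv_le (convex_uIcc a b) hf hf' hM hc hy).trans
      (by gcongr M * ?_ ^ 2; exact abs_sub_le_of_uIcc_subset_uIcc (uIcc_subset_uIcc hc hy))
  have hsplit : lerpError f a b x =
      -((1 - x) • (f a - f c - (a - c) • f' c) + x • (f b - f c - (b - c) • f' c)) := by
    rw [lerpError, ← hc_def, lineMap_apply_module]
    have hcancel : (1 - x) * (a - c) + x * (b - c) = 0 := by
      rw [hc_def, lineMap_apply_module, smul_eq_mul, smul_eq_mul]
      ring
    have hcancel_smul := congrArg (· • f' c) hcancel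
    linear_combination (norm := module) -hcancel_smul
  rw [hsplit, norm_neg, ← mem_closedBall_zero_iff]
  exact convex_closedBall (0 : E) _ (mem_closedBall_zero_iff.mpr (taylor a left_mem_uIcc))
    (mem_closedBall_zero_iff.mpr (taylor b right_mem_uIcc)) (by linarith [hx.2]) hx.1 (by ring)

end LinearInterpolation

lemma isOpen_lt_re (σ : ℝ) : IsOpen {s : ℂ | σ < s.re} :=
  isOpen_lt continuous_const Complex.continuous_re

section Powers

variable {a b x : ℝ}

lemma hasDerivAt_ofReal_cpow_of_pos (r : ℂ) {t : ℝ} (ht : 0 < t) :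
    HasDerivAt (fun t : ℝ => (t : ℂ) ^ r) (r * (t : ℂ) ^ (r - 1)) t := by
  simpa using ((hasDerivAt_id (t : ℂ)).cpow_const (c := r)
    (Complex.ofReal_mem_slitPlane.mpr ht)).comp_ofReal

lemma norm_lerpError_cpow_le (ha : 0 < a) (hab : a ≤ b) (hx : x ∈ Icc (0 : ℝ) 1) {s : ℂ}
    (hs : -2 ≤ s.re) :
    ‖lerpError (fun t : ℝ => (t : ℂ) ^ (-s)) a b x‖ ≤
      ‖s‖ * ‖s + 1‖ * a ^ (-s.re - 2) * |b - a| ^ 2 := by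
  have hle {t} (ht : t ∈ uIcc a b) : a ≤ t := (uIcc_of_le hab ▸ ht).1
  refine norm_lerpError_le (f' := fun t => -s * (t : ℂ) ^ (-s - 1))
    (f'' := fun t => -s * ((-s - 1) * (t : ℂ) ^ (-s - 1 - 1))) hx
    (fun t ht => (hasDerivAt_ofReal_cpow_of_pos _ (ha.trans_le (hle ht))).hasDerivWithinAt)
    (fun t ht => ((hasDerivAt_ofReal_cpow_of_pos _
      (ha.trans_le (hle ht))).const_mul (-s)).hasDerivWithinAt)
    (fun t ht => ?_)
  have hre : (-s - 1 - 1).re = -s.re - 2 := by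
    simp only [Complex.sub_re, Complex.neg_re, Complex.one_re]
    ring
  rw [norm_mul, norm_mul, norm_neg, ← neg_add', norm_neg, ← mul_assoc,
    Complex.norm_cpow_eq_rpow_re_of_pos (ha.trans_le (hle ht)), neg_add', hre]
  gcongr ‖s‖ * ‖s + 1‖ * ?_
  exact Real.rpow_le_rpow_of_nonpos ha (hle ht) (by linarith)

lemma hasDerivAt_lerpError_cpow (ha : 0 < a) (hb : 0 < b) (hx : x ∈ Icc (0 : ℝ) 1) (s : ℂ) :
    HasDerivAt (fun s : ℂ => lerpError (fun t : ℝ => (t : ℂ) ^ (-s)) a b x)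
      (lerpError (fun t : ℝ => -((t : ℂ) ^ (-s) * (Real.log t : ℂ))) a b x) s := by
  have hcpow {t : ℝ} (ht : 0 < t) :
      HasDerivAt (fun s : ℂ => (t : ℂ) ^ (-s)) (-((t : ℂ) ^ (-s) * (Real.log t : ℂ))) s := by
    simpa [Complex.ofReal_log ht.le] using
      (hasDerivAt_neg s).const_cpow (.inl (Complex.ofReal_ne_zero.mpr ht.ne'))
  have hc : 0 < lineMap a b x := (convex_Ioi (0 : ℝ)).lineMap_mem ha hb hx
  simp only [lerpError, lineMap_apply_module]
  rw [lineMap_apply_module] at hc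
  exact (hcpow hc).sub (((hcpow ha).const_smul (1 - x)).add ((hcpow hb).const_smul x))

lemma differentiable_lerpError_cpow (ha : 0 < a) (hb : 0 < b) (hx : x ∈ Icc (0 : ℝ) 1) :
    Differentiable ℂ fun s : ℂ => lerpError (fun t : ℝ => (t : ℂ) ^ (-s)) a b x :=
  fun s => (hasDerivAt_lerpError_cpow ha hb hx s).differentiableAt

lemma deriv_lerpError_cpow_zero (ha : 0 < a) (hb : 0 < b) (hx : x ∈ Icc (0 : ℝ) 1) :
    deriv (fun s : ℂ => lerpError (fun t : ℝ => (t : ℂ) ^ (-s)) a b x) 0 =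
      ((-lerpError Real.log a b x : ℝ) : ℂ) := by
  rw [(hasDerivAt_lerpError_cpow ha hb hx 0).deriv]
  simp only [lerpError, lineMap_apply_module, neg_zero, Complex.cpow_zero, one_mul, smul_neg,
    Complex.real_smul, smul_eq_mul]
  push_cast
  ring

lemma summableLocallyUniformlyOn_lerpError_cpow (hx : x ∈ Icc (0 : ℝ) 1) :
    SummableLocallyUniformlyOn
      (fun (n : ℕ) (s : ℂ) => lerpError (fun t : ℝ => (t : ℂ) ^ (-s)) (n + 1) (n + 1 + 1) x)
      {s | -1 < s.re} := by
  refine SummableLocallyUniformlyOn_of_locally_bounded (isOpen_lt_re (-1)) fun K hK hKc => ?_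
  obtain ⟨C, hC⟩ := hKc.exists_bound_of_continuousOn
    (f := fun s : ℂ => s * (s + 1)) (by fun_prop)
  obtain ⟨σ, hσ, hσK⟩ : ∃ σ > -1, ∀ s ∈ K, σ ≤ s.re :=
    hKc.exists_forall_le' Complex.continuous_re.continuousOn hK
  have hsum : Summable fun n : ℕ => ((n + 1 : ℕ) : ℝ) ^ (-σ - 2) :=
    (summable_nat_add_iff 1).mpr (Real.summable_nat_rpow.mpr (by linarith))
  refine ⟨_, hsum.mul_left C, fun n s hs => ?_⟩
  have hbound := norm_lerpError_cpow_le (a := n + 1) (b := n + 1 + 1) (by positivity)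
    (by linarith) hx (s := s) (by linarith [hσK s hs])
  rw [add_sub_cancel_left, abs_one, one_pow, mul_one, ← norm_mul] at hbound
  have hC0 : 0 ≤ C := (norm_nonneg _).trans (hC s hs)
  calc _ ≤ ‖s * (s + 1)‖ * ((n : ℝ) + 1) ^ (-s.re - 2) := hbound
    _ ≤ C * ((n + 1 : ℕ) : ℝ) ^ (-σ - 2) := by
      rw [Nat.cast_add_one]
      gcongr
      · exact hC s hs
      · linarith [n.cast_nonneg (α := ℝ)]
      · exact hσK s hs

end Powers

lemma hasSum_deriv_of_summableLocallyUniformlyOn {ι E : Type*} [NormedAddCommGroup E]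
    [NormedSpace ℂ E] [CompleteSpace E] {f : ι → ℂ → E} {U : Set ℂ} {z : ℂ} (hU : IsOpen U)
    (hsum : SummableLocallyUniformlyOn f U) (hf : ∀ i, DifferentiableOn ℂ (f i) U) (hz : z ∈ U) :
    HasSum (fun i => deriv (f i) z) (deriv (fun w => ∑' i, f i w) z) := by
  have hlim := hasSumLocallyUniformlyOn_iff_tendstoLocallyUniformlyOn.mp
    hsum.hasSumLocallyUniformlyOn
  have hderiv := (hlim.deriv
    (.of_forall fun t => DifferentiableOn.fun_sum fun i _ => hf i) hU).tendsto_at hz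
  refine hderiv.congr fun t => ?_
  exact deriv_fun_sum fun i _ => (hf i).differentiableAt (hU.mem_nhds hz)

section Gamma

lemma sum_range_lerpError_log (x : ℝ) (N : ℕ) :
    ∑ n ∈ Finset.range N, lerpError Real.log (n + 1) (n + 1 + 1) x =
      -Real.BohrMollerup.logGammaSeq x N - Real.log x
        - x * (Real.log (N + 1) - Real.log N) := by
  have hfactorial : Real.log N.factorial = ∑ n ∈ Finset.range N, Real.log (n + 1) := by
    rw [← Finset.prod_range_add_one_eq_factorial, Nat.cast_prod,
      Real.log_prod fun n _ => by positivity]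
    simp only [Nat.cast_add_one]
  rw [sum_range_lerpError, Real.BohrMollerup.logGammaSeq, Finset.sum_range_succ', hfactorial]
  simp only [Nat.cast_add_one, Nat.cast_zero, add_comm x, zero_add, Real.log_one, sub_zero,
    smul_eq_mul]
  ring

lemma tendsto_sum_lerpError_log {x : ℝ} (hx : 0 < x) :
    Tendsto (fun N : ℕ => ∑ n ∈ Finset.range N, lerpError Real.log (n + 1) (n + 1 + 1) x) atTop
      (𝓝 (-Real.log (Real.Gamma (x + 1)))) := by
  rw [Real.Gamma_add_one hx.ne', Real.log_mul hx.ne' (Real.Gamma_pos_of_pos hx).ne', neg_add_rev,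
    ← sub_eq_add_neg]
  simp only [sum_range_lerpError_log]
  simpa using ((Real.BohrMollerup.tendsto_log_gamma hx).neg.sub_const (Real.log x)).sub
    (Real.tendsto_log_nat_add_one_sub_log.const_mul x)

end Gamma

section ErrorSeries

/-- The sum over `n ≥ 1` of the errors, at `n + x`, of the linear interpolation of `t ↦ t⁻ˢ`
between `n` and `n + 1`. It continues `ζ(s, x) - ζ(s) - x⁻ˢ + x` to the half-plane `-1 < re s`. -/
noncomputable def lerpErrorSeries (x : ℝ) (s : ℂ) : ℂ :=
  ∑' n : ℕ, lerpError (fun t : ℝ => (t : ℂ) ^ (-s)) (n + 1) (n + 1 + 1) x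

variable {x : ℝ}

lemma differentiableOn_lerpErrorSeries (hx : x ∈ Icc (0 : ℝ) 1) :
    DifferentiableOn ℂ (lerpErrorSeries x) {s | -1 < s.re} :=
  (summableLocallyUniformlyOn_lerpError_cpow hx).differentiableOn (isOpen_lt_re (-1)) fun _ s _ =>
    differentiable_lerpError_cpow (by positivity) (by positivity) hx s

lemma deriv_lerpErrorSeries_zero (hx : x ∈ Ioc (0 : ℝ) 1) :
    deriv (lerpErrorSeries x) 0 = (Real.log (Real.Gamma (x + 1)) : ℂ) := by
  have hx' : x ∈ Icc (0 : ℝ) 1 := Ioc_subset_Icc_self hx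
  have hsum := (hasSum_deriv_of_summableLocallyUniformlyOn (isOpen_lt_re (-1))
    (summableLocallyUniformlyOn_lerpError_cpow hx')
    (fun n => (differentiable_lerpError_cpow (by positivity) (by positivity)
      hx').differentiableOn) (z := 0) (by simp)).tendsto_sum_nat
  refine tendsto_nhds_unique hsum ?_
  simp only [deriv_lerpError_cpow_zero (Nat.cast_add_one_pos _)
    (add_pos (Nat.cast_add_one_pos _) one_pos) hx', ← Complex.ofReal_sum, Finset.sum_neg_distrib]
  simpa only [neg_neg, Function.comp_def] using
    (Complex.continuous_ofReal.tendsto _).comp (tendsto_sum_lerpError_log hx.1).neg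

end ErrorSeries

section HurwitzZeta

open HurwitzZeta

variable {x : ℝ}

lemma hasSum_cpow_neg_hurwitzZeta (hx : x ∈ Icc (0 : ℝ) 1) {s : ℂ} (hs : 1 < s.re) :
    HasSum (fun n : ℕ => ((n + x : ℝ) : ℂ) ^ (-s)) (hurwitzZeta x s) := by
  simpa [Complex.cpow_neg] using hasSum_hurwitzZeta_of_one_lt_re hx hs

lemma hasSum_cpow_neg_riemannZeta {s : ℂ} (hs : 1 < s.re) :
    HasSum (fun n : ℕ => ((n + 1 : ℝ) : ℂ) ^ (-s)) (riemannZeta s) := by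
  rw [← hurwitzZeta_zero, ← AddCircle.coe_period (1 : ℝ)]
  exact hasSum_cpow_neg_hurwitzZeta (right_mem_Icc.mpr zero_le_one) hs

lemma hurwitzZeta_sub_riemannZeta_of_one_lt_re (hx : x ∈ Icc (0 : ℝ) 1) {s : ℂ}
    (hs : 1 < s.re) :
    hurwitzZeta x s - riemannZeta s = lerpErrorSeries x s + (x : ℂ) ^ (-s) - x := by
  rw [lerpErrorSeries, (hasSum_lerpError (f := fun t : ℝ => (t : ℂ) ^ (-s))
    (hasSum_cpow_neg_hurwitzZeta hx hs) (hasSum_cpow_neg_riemannZeta hs)).tsum_eq,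
    Complex.ofReal_one, Complex.one_cpow, Complex.real_smul]
  ring

lemma hurwitzZeta_sub_riemannZeta_eqOn (hx : x ∈ Ioc (0 : ℝ) 1) :
    EqOn (fun s => hurwitzZeta x s - riemannZeta s)
      (fun s => lerpErrorSeries x s + (x : ℂ) ^ (-s) - x) {s | -1 < s.re} := by
  have hx' : x ∈ Icc (0 : ℝ) 1 := Ioc_subset_Icc_self hx
  have hzeta : Differentiable ℂ fun s => hurwitzZeta x s - riemannZeta s := by
    simpa only [hurwitzZeta_zero] using
      differentiable_hurwitzZeta_sub_hurwitzZeta (x : UnitAddCircle) 0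
  have hcpow : Differentiable ℂ fun s : ℂ => (x : ℂ) ^ (-s) := fun s =>
    differentiableAt_id.neg.const_cpow (.inl (Complex.ofReal_ne_zero.mpr hx.1.ne'))
  have hseries : DifferentiableOn ℂ (fun s => lerpErrorSeries x s + (x : ℂ) ^ (-s) - x)
      {s | -1 < s.re} :=
    ((differentiableOn_lerpErrorSeries hx').add hcpow.differentiableOn).sub_const _
  refine AnalyticOnNhd.eqOn_of_preconnected_of_eventuallyEq (z₀ := 2)
    (hzeta.differentiableOn.analyticOnNhd (isOpen_lt_re (-1)))
    (hseries.analyticOnNhd (isOpen_lt_re (-1)))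
    (convex_halfSpace_re_gt (-1)).isPreconnected (by norm_num) ?_
  filter_upwards [(isOpen_lt_re 1).mem_nhds (show (1 : ℝ) < (2 : ℂ).re by norm_num)] with s hs
  exact hurwitzZeta_sub_riemannZeta_of_one_lt_re hx' hs

lemma deriv_hurwitzZeta_sub_riemannZeta_zero (hx : x ∈ Ioc (0 : ℝ) 1) :
    deriv (fun s => hurwitzZeta x s - riemannZeta s) 0 = (Real.log (Real.Gamma x) : ℂ) := by
  have hnhds : {s : ℂ | -1 < s.re} ∈ 𝓝 0 := (isOpen_lt_re (-1)).mem_nhds (by simp)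
  have hseries := ((differentiableOn_lerpErrorSeries
    (Ioc_subset_Icc_self hx)).differentiableAt hnhds).hasDerivAt
  have hcpow := (hasDerivAt_neg (0 : ℂ)).const_cpow (c := (x : ℂ))
    (.inl (Complex.ofReal_ne_zero.mpr hx.1.ne'))
  rw [((hurwitzZeta_sub_riemannZeta_eqOn hx).eventuallyEq_of_mem hnhds).deriv_eq,
    ((hseries.fun_add hcpow).sub_const (x : ℂ)).deriv, deriv_lerpErrorSeries_zero hx,
    ← Complex.ofReal_log hx.1.le, Real.Gamma_add_one hx.1.ne',
    Real.log_mul hx.1.ne' (Real.Gamma_pos_of_pos hx.1).ne']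
  simp

end HurwitzZeta

end LerchFormula

theorem stmt_6 (x : ℝ) (hx0 : 0 < x) (hx1 : x ≤ 1) :
    deriv (fun s : ℂ => HurwitzZeta.hurwitzZeta (↑x : UnitAddCircle) s) 0
      = ((Real.log (Real.Gamma x) - (1 / 2) * Real.log (2 * Real.pi) : ℝ) : ℂ) := by
  have hdiff := LerchFormula.deriv_hurwitzZeta_sub_riemannZeta_zero ⟨hx0, hx1⟩
  rw [deriv_fun_sub (HurwitzZeta.differentiableAt_hurwitzZeta _ zero_ne_one)
    (differentiableAt_riemannZeta zero_ne_one), deriv_riemannZeta_zero] at hdiff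
  rw [eq_add_of_sub_eq hdiff]
  push_cast [Complex.ofReal_log Real.two_pi_pos.le]
  ring
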